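/- Let q be an odd prime power, ξ ∈ 𝔽_q^× a non-square in 𝔽_q, and let 𝔯 ∈ 𝔽_q[T] be a product of at least one and finitely many pairwise distinct monic irreducible polynomials, each of odd degree. If x, y, z ∈ 𝔽_q[T] satisfy x² = ξ·y² + 𝔯·z², then x = y = z = 0. Equivalently, the conic X² − ξY² − 𝔯Z² = 0 in the projective plane has no points rational over F = 𝔽_q(T). -/

import Mathlib

open Polynomial

/-!
At an irreducible factor `p` of odd degree, `ξ` remains a nonsquare in the residue field `K[T]/(p)`,
because the norm down to `K` takes a square root of `ξ` to a square root of an odd power of `ξ`.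
Hence the `p`-adic valuation of `x² - ξy²` is twice that of `gcd(x, y)`, in particular even, whereas
that of `rz²` is odd unless `z = 0`.
-/

section GroupWithZero

variable {G : Type*} [CommGroupWithZero G] {a : G}

theorem isSquare_of_isSquare_pow_of_odd {n : ℕ} (h : IsSquare (a ^ n)) (hn : Odd n) :
    IsSquare a := by
  obtain rfl | ha := eq_or_ne a 0
  · exact .zero
  obtain ⟨k, rfl⟩ := hn
  have hak : a = a ^ (2 * k + 1) / a ^ (2 * k) := by
    rw [pow_succ, mul_div_cancel_left₀ _ (pow_ne_zero _ ha)]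
  rw [hak]
  exact h.div ((even_two_mul k).isSquare_pow a)

theorem sq_eq_mul_sq_iff_of_not_isSquare (ha : ¬IsSquare a) {x y : G} :
    x ^ 2 = a * y ^ 2 ↔ x = 0 ∧ y = 0 := by
  refine ⟨fun h ↦ ?_, by rintro ⟨rfl, rfl⟩; simp⟩
  have hy : y = 0 := by
    by_contra hy
    refine ha ((isSquare_iff_exists_sq a).2 ⟨x / y, ?_⟩)
    rw [div_pow, h, mul_div_cancel_right₀ _ (pow_ne_zero 2 hy)]
  exact ⟨by simpa [hy] using h, hy⟩

end GroupWithZero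

theorem isSquare_algebraMap_iff_of_odd_finrank {K A : Type*} [Field K] [Ring A] [Algebra K A]
    (h : Odd (Module.finrank K A)) {a : K} : IsSquare (algebraMap K A a) ↔ IsSquare a := by
  refine ⟨fun ha ↦ isSquare_of_isSquare_pow_of_odd ?_ h, fun ha ↦ ha.map (algebraMap K A)⟩
  rw [← Algebra.norm_algebraMap (S := A)]
  exact ha.map (Algebra.norm K)

theorem isSquare_mk_C_iff_of_odd_natDegree {K : Type*} [Field K] {p : K[X]}
    (hp : Odd p.natDegree) {a : K} : IsSquare (AdjoinRoot.mk p (C a)) ↔ IsSquare a := by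
  have hp0 : p ≠ 0 := ne_zero_of_natDegree_gt hp.pos
  have hfinrank : Module.finrank K (AdjoinRoot p) = p.natDegree := by
    rw [(AdjoinRoot.powerBasis hp0).finrank, AdjoinRoot.powerBasis_dim]
  rw [AdjoinRoot.mk_C, ← AdjoinRoot.algebraMap_eq]
  exact isSquare_algebraMap_iff_of_odd_finrank (hfinrank ▸ hp)

theorem eq_top_of_two_mul_eq_odd_add_two_mul {n : ℕ} (hn : Odd n) {a b : ℕ∞}
    (h : 2 * a = n + 2 * b) : a = ⊤ ∧ b = ⊤ := by
  cases a <;> cases b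
  case top.top => exact ⟨rfl, rfl⟩
  case top.coe b => exact absurd h (ENat.top_ne_natCast (n + 2 * b))
  case coe.top a => exact absurd h.symm (by simpa using ENat.top_ne_natCast (2 * a))
  case coe.coe a b =>
    norm_cast at h
    grind

section NormForm

variable {R F : Type*} [CommRing R] [IsDomain R] [Field F] {φ : R →+* F} {p ξ : R}

theorem emultiplicity_sq_sub_mul_sq [GCDMonoid R] (hp : Prime p) (hφ : ∀ a, φ a = 0 ↔ p ∣ a)
    (hξ : ¬IsSquare (φ ξ)) (x y : R) :
    emultiplicity p (x ^ 2 - ξ * y ^ 2) = 2 * emultiplicity p (gcd x y) := by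
  obtain ⟨a, b, hx, hy, hab⟩ := extract_gcd x y
  have hnorm : ¬p ∣ a ^ 2 - ξ * b ^ 2 := by
    rw [← hφ, map_sub, map_mul, map_pow, map_pow, sub_eq_zero,
      sq_eq_mul_sq_iff_of_not_isSquare hξ, hφ, hφ, ← dvd_gcd_iff]
    exact fun h ↦ hp.not_isUnit (isUnit_of_dvd_unit h hab)
  calc emultiplicity p (x ^ 2 - ξ * y ^ 2)
      = emultiplicity p (gcd x y ^ 2 * (a ^ 2 - ξ * b ^ 2)) := by
        congr 1
        linear_combination (x + gcd x y * a) * hx - ξ * (y + gcd x y * b) * hy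
    _ = 2 * emultiplicity p (gcd x y) := by
        rw [emultiplicity_mul hp, emultiplicity_pow hp, emultiplicity_eq_zero.2 hnorm, add_zero,
          Nat.cast_ofNat]

theorem eq_zero_of_sq_eq_mul_sq_add_mul_sq [UniqueFactorizationMonoid R] (hp : Prime p)
    (hφ : ∀ a, φ a = 0 ↔ p ∣ a) (hξ : ¬IsSquare (φ ξ)) {r : R} {n : ℕ} (hn : Odd n)
    (hr : emultiplicity p r = n) {x y z : R} (h : x ^ 2 = ξ * y ^ 2 + r * z ^ 2) :
    x = 0 ∧ y = 0 ∧ z = 0 := by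
  let _ := UniqueFactorizationMonoid.toGCDMonoid R
  have hval : 2 * emultiplicity p (gcd x y) = n + 2 * emultiplicity p z := by
    rw [← emultiplicity_sq_sub_mul_sq hp hφ hξ, h, add_sub_cancel_left, emultiplicity_mul hp,
      emultiplicity_pow hp, hr, Nat.cast_ofNat]
  have eq_zero_of_emultiplicity_eq_top {a : R} (ha : emultiplicity p a = ⊤) : a = 0 := by
    contrapose! ha
    exact finiteMultiplicity_iff_emultiplicity_ne_top.1 (.of_prime_left hp ha)
  obtain ⟨hgcd, hz⟩ := eq_top_of_two_mul_eq_odd_add_two_mul hn hval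
  obtain ⟨hx, hy⟩ := (gcd_eq_zero_iff x y).1 (eq_zero_of_emultiplicity_eq_top hgcd)
  exact ⟨hx, hy, eq_zero_of_emultiplicity_eq_top hz⟩

end NormForm

theorem emultiplicity_prod_eq_one {M : Type*} [CommMonoidWithZero M] [IsCancelMulZero M]
    {S : Finset M} {p : M} (hp : Prime p) (hpS : p ∈ S) (hS : ∀ f ∈ S, p ∣ f → f = p) :
    emultiplicity p (∏ f ∈ S, f) = 1 := by
  rw [Finset.emultiplicity_prod hp, Finset.sum_eq_single_of_mem p hpS]
  · simpa using emultiplicity_pow_self hp.ne_zero hp.not_isUnit 1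
  · exact fun f hf hfp ↦ emultiplicity_eq_zero.2 fun hpf ↦ hfp (hS f hf hpf)

theorem emultiplicity_prod_eq_one_of_monic_of_irreducible {K : Type*} [Field K] {S : Finset K[X]}
    (hS : ∀ f ∈ S, f.Monic ∧ Irreducible f) {p : K[X]} (hpS : p ∈ S) :
    emultiplicity p (∏ f ∈ S, f) = 1 := by
  obtain ⟨hpm, hp⟩ := hS p hpS
  refine emultiplicity_prod_eq_one hp.prime hpS fun f hfS hpf ↦ ?_
  obtain ⟨hfm, hf⟩ := hS f hfS
  exact eq_of_monic_of_associated hfm hpm (hp.associated_of_dvd hf hpf).symm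

theorem conic_no_rational_points_general {K : Type*} [Field K] {ξ : K} (hξ : ¬IsSquare ξ)
    {p r : K[X]} (hp : Irreducible p) (hdeg : Odd p.natDegree) {n : ℕ} (hn : Odd n)
    (hr : emultiplicity p r = n) {x y z : K[X]} (h : x ^ 2 = C ξ * y ^ 2 + r * z ^ 2) :
    x = 0 ∧ y = 0 ∧ z = 0 := by
  have : Fact (Irreducible p) := ⟨hp⟩
  exact eq_zero_of_sq_eq_mul_sq_add_mul_sq hp.prime (fun _ ↦ AdjoinRoot.mk_eq_zero)
    (mt (isSquare_mk_C_iff_of_odd_natDegree hdeg).1 hξ) hn hr h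

/-- Let `q` be an odd prime power, `ξ ∈ 𝔽_q^×` a non-square, and
`𝔯 ∈ 𝔽_q[T]` a product of at least one and finitely many pairwise distinct monic
irreducible polynomials, each of odd degree.  If `x, y, z ∈ 𝔽_q[T]` satisfy
`x² = ξy² + 𝔯z²`, then `x = y = z = 0`; i.e. the conic `X² − ξY² − 𝔯Z² = 0` has no
points rational over `𝔽_q(T)`. -/
theorem conic_no_rational_points
    (Fq : Type*) [Field Fq] [Fintype Fq] (hodd : Odd (Fintype.card Fq))
    (ξ : Fq) (hξ : ξ ≠ 0) (hns : ¬ ∃ u : Fq, u ^ 2 = ξ)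
    (S : Finset (Polynomial Fq)) (hS : S.Nonempty)
    (hSmi : ∀ f ∈ S, f.Monic ∧ Irreducible f ∧ Odd f.natDegree)
    (r : Polynomial Fq) (hr : r = ∏ f ∈ S, f)
    (x y z : Polynomial Fq) (h : x ^ 2 = C ξ * y ^ 2 + r * z ^ 2) :
    x = 0 ∧ y = 0 ∧ z = 0 := by
  obtain ⟨p, hpS⟩ := hS
  obtain ⟨-, hp, hdeg⟩ := hSmi p hpS
  have hξ_sq : ¬IsSquare ξ := fun hsq ↦ hns (hsq.imp fun u hu ↦ by rw [hu, sq])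
  have hmult : emultiplicity p r = (1 : ℕ) :=
    hr ▸ emultiplicity_prod_eq_one_of_monic_of_irreducible
      (fun f hf ↦ ⟨(hSmi f hf).1, (hSmi f hf).2.1⟩) hpS
  exact conic_no_rational_points_general hξ_sq hp hdeg odd_one hmult h
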